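/- Let G₁₄ be the simple graph on vertex set {1,…,14} whose edge set is exactly {1,5},{1,7},{1,8},{1,9},{1,11},{2,4},{2,5},{2,8},{2,10},{2,11},{2,14},{3,4},{3,5},{3,6},{4,7},{4,9},{6,7},{6,8},{6,10},{6,12},{6,13},{9,10},{9,12},{9,14},{11,12},{11,13},{13,14}. Then G₁₄ has exactly 27 edges, is triangle-free, and has chromatic number 4. -/

import Mathlib

/-- The edge list of the graph `G₁₄` on vertex set `{1, …, 14}`. -/
def edges14 : List (ℕ × ℕ) :=
  [(1,5),(1,7),(1,8),(1,9),(1,11),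
   (2,4),(2,5),(2,8),(2,10),(2,11),(2,14),
   (3,4),(3,5),(3,6),
   (4,7),(4,9),
   (6,7),(6,8),(6,10),(6,12),(6,13),
   (9,10),(9,12),(9,14),
   (11,12),(11,13),
   (13,14)]

/-- The simple graph `G₁₄` on vertex set `{1, …, 14}` (modeled as `Fin 14`, with
vertex `i : Fin 14` representing the label `i + 1`) whose edges are exactly those
listed in `edges14`. -/
def G14 : SimpleGraph (Fin 14) :=
  SimpleGraph.fromRel (fun u v => ((u.val + 1, v.val + 1) ∈ edges14))

instance : DecidableRel G14.Adj := fun u v =>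
  inferInstanceAs (Decidable (u ≠ v ∧ ((u.val + 1, v.val + 1) ∈ edges14 ∨
    (v.val + 1, u.val + 1) ∈ edges14)))

set_option synthInstance.maxHeartbeats 400000 in
set_option synthInstance.maxSize 4096 in
set_option maxRecDepth 10000 in
/-- No assignment of three colors is proper. -/
theorem no_three :
    ∀ x1 : Fin 3, 
    ∀ x7 : Fin 3, x7 ≠ x1 → 
    ∀ x6 : Fin 3, x6 ≠ x7 → 
    ∀ x8 : Fin 3, x8 ≠ x1 → x8 ≠ x6 → 
    ∀ x2 : Fin 3, x2 ≠ x8 → 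
    ∀ x4 : Fin 3, x4 ≠ x7 → x4 ≠ x2 → 
    ∀ x9 : Fin 3, x9 ≠ x1 → x9 ≠ x4 → 
    ∀ x10 : Fin 3, x10 ≠ x6 → x10 ≠ x2 → x10 ≠ x9 → 
    ∀ x11 : Fin 3, x11 ≠ x1 → x11 ≠ x2 → 
    ∀ x12 : Fin 3, x12 ≠ x6 → x12 ≠ x9 → x12 ≠ x11 → 
    ∀ x3 : Fin 3, x3 ≠ x6 → x3 ≠ x4 → 
    ∀ x5 : Fin 3, x5 ≠ x1 → x5 ≠ x2 → x5 ≠ x3 → 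
    ∀ x13 : Fin 3, x13 ≠ x6 → x13 ≠ x11 → 
    ∀ x14 : Fin 3, x14 ≠ x2 → x14 ≠ x9 → x14 ≠ x13 → 
    False := by
  decide +kernel

theorem not_colorable_three : ¬ G14.Colorable 3 := by
  rintro ⟨c⟩
  exact no_three (c 0) (c 6) (c.valid (by decide)) (c 5)
    (c.valid (by decide)) (c 7) (c.valid (by decide)) (c.valid (by decide))
    (c 1) (c.valid (by decide)) (c 3) (c.valid (by decide))
    (c.valid (by decide)) (c 8) (c.valid (by decide)) (c.valid (by decide))
    (c 9) (c.valid (by decide)) (c.valid (by decide)) (c.valid (by decide))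
    (c 10) (c.valid (by decide)) (c.valid (by decide)) (c 11)
    (c.valid (by decide)) (c.valid (by decide)) (c.valid (by decide)) (c 2)
    (c.valid (by decide)) (c.valid (by decide)) (c 4) (c.valid (by decide))
    (c.valid (by decide)) (c.valid (by decide)) (c 12) (c.valid (by decide))
    (c.valid (by decide)) (c 13) (c.valid (by decide)) (c.valid (by decide))
    (c.valid (by decide))

theorem colorable_four : G14.Colorable 4 :=
  ⟨SimpleGraph.Coloring.mk (![1, 0, 0, 1, 2, 1, 0, 2, 0, 2, 2, 3, 0, 1] : Fin 14 → Fin 4)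
    (by
      have h : ∀ v w, G14.Adj v w →
          (![1, 0, 0, 1, 2, 1, 0, 2, 0, 2, 2, 3, 0, 1] : Fin 14 → Fin 4) v ≠
          (![1, 0, 0, 1, 2, 1, 0, 2, 0, 2, 2, 3, 0, 1] : Fin 14 → Fin 4) w := by
        decide +kernel
      intro v w hvw
      exact h v w hvw)⟩

theorem no_triangle : ∀ a b, G14.Adj a b → ∀ c, G14.Adj a c → ¬ G14.Adj b c := by
  decide +kernel

theorem card_edges : G14.edgeFinset.card = 27 := by
  decide +kernel

/-- `G₁₄` has exactly 27 edges, is triangle-free, and has chromatic number 4. -/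
theorem stmt_15 :
    G14.edgeSet.ncard = 27 ∧ G14.CliqueFree 3 ∧ G14.chromaticNumber = 4 := by
  refine ⟨?_, ?_, ?_⟩
  · rw [← SimpleGraph.coe_edgeFinset, Set.ncard_coe_finset]
    exact card_edges
  · intro s hs
    obtain ⟨a, b, c, hab, hac, hbc, -⟩ := SimpleGraph.is3Clique_iff.mp hs
    exact no_triangle a b hab c hac hbc
  · apply le_antisymm
    · exact_mod_cast colorable_four.chromaticNumber_le
    · by_contra hlt
      have h3 : G14.chromaticNumber ≤ (3 : ℕ) := by
        apply Order.le_of_lt_add_one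
        have := not_le.mp hlt
        norm_num
        exact this
      exact not_colorable_three (SimpleGraph.chromaticNumber_le_iff_colorable.mp h3)
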